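/- arXiv:2004.03240 — 6 statements merged into one kernel-verified Lean document; each statement's English description precedes it below -/
import Mathlib

section
/- Let d ≥ 1, let Q := (−1/2, 1/2)^d, and let χ : ℝ^d → ℝ be a smooth function compactly supported in Q with 0 ≤ χ ≤ 1 and χ ≡ 1 on (−1/4, 1/4)^d. Then there exists a constant C > 0, depending only on d and χ, such that every continuously differentiable function ζ : ℝ^d → ℝ satisfies ∫_{(−1/4,1/4)^d} |ζ|² ≤ C ( ∫_Q |x|² |∇ζ(x)|² dx + ∫_{Q ∖ (−1/4,1/4)^d} |ζ|² ). -/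
/-! The divergence identity `div x = d`, tested against `g = χ² ζ²`, reads
`d ∫ g = - ∫ Dg(x)·x`; coordinatewise it is integration by parts of `x_i` against `∂_i g`
(`integral_fderiv_apply_self`). Expanding `Dg(x)·x = 2 χ² ζ Dζ(x)·x + 2 χ ζ² Dχ(x)·x`, Young's
inequality absorbs half of `g` from the first term and leaves `2 |x|² |∇ζ|²` on the large cube. The
second term is at most `2 M ζ²`, where `M` bounds `χ Dχ(x)·x`, and is supported in the annulus
between the cubes because `χ` is constant on the small one. As `d ≥ 1`, at least `½ ∫ g` remains on
the left-hand side, and it dominates half of the integral of `ζ²` over the small cube. -/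

open MeasureTheory Metric Set

noncomputable section

/-- The open cube `(-a, a)^d` in `ℝ^d`. -/
def openCube (d : ℕ) (a : ℝ) : Set (EuclideanSpace ℝ (Fin d)) :=
  {x | ∀ i, x i ∈ Set.Ioo (-a) a}

lemma isOpen_openCube (d : ℕ) (a : ℝ) : IsOpen (openCube d a) := by
  simp only [openCube, Set.ofPred_forall]
  exact isOpen_iInter_of_finite fun i => isOpen_Ioo.preimage (by fun_prop)

lemma openCube_subset_closedBall (d : ℕ) (a : ℝ) :
    openCube d a ⊆ closedBall 0 (∑ _i : Fin d, a) := by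
  intro x hx
  rw [mem_closedBall_zero_iff, ← (EuclideanSpace.basisFun (Fin d) ℝ).sum_repr x]
  refine (norm_sum_le _ _).trans (Finset.sum_le_sum fun i _ => ?_)
  rw [norm_smul, (EuclideanSpace.basisFun (Fin d) ℝ).norm_eq_one, mul_one]
  simpa using abs_le.2 ⟨(hx i).1.le, (hx i).2.le⟩

lemma Continuous.integrableOn_openCube {d : ℕ} {f : EuclideanSpace ℝ (Fin d) → ℝ}
    (hf : Continuous f) (a : ℝ) : IntegrableOn f (openCube d a) :=
  (hf.continuousOn.integrableOn_compact (isCompact_closedBall _ _)).mono_set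
    (openCube_subset_closedBall d a)

/-- The weak form of `div x = d`: a compactly supported `C¹` function `g` satisfies
`∫ Dg(x)·x = - d ∫ g`. -/
lemma integral_fderiv_apply_self {d : ℕ} {g : EuclideanSpace ℝ (Fin d) → ℝ}
    (hg : ContDiff ℝ 1 g) (hc : HasCompactSupport g) :
    ∫ x, fderiv ℝ g x x = -(d * ∫ x, g x) := by
  set b := EuclideanSpace.basisFun (Fin d) ℝ with hb
  have hg' : Continuous (fderiv ℝ g) := hg.continuous_fderiv (by simp)
  have hcv : ∀ v, HasCompactSupport fun x => fderiv ℝ g x v := fun v => hc.fderiv_apply ℝ v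
  have hint : ∀ i, Integrable fun x : EuclideanSpace ℝ (Fin d) => x i * fderiv ℝ g x (b i) :=
    fun i => Continuous.integrable_of_hasCompactSupport
      (f := fun x : EuclideanSpace ℝ (Fin d) => x i * fderiv ℝ g x (b i))
      (by fun_prop) (hcv (b i)).mul_left
  have hexp : ∀ x : EuclideanSpace ℝ (Fin d),
      fderiv ℝ g x x = ∑ i, x i * fderiv ℝ g x (b i) := by
    intro x
    calc fderiv ℝ g x x = fderiv ℝ g x (∑ i, b.repr x i • b i) := by rw [b.sum_repr]
      _ = ∑ i, x i * fderiv ℝ g x (b i) := by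
        rw [map_sum]
        simp [hb]
  have hpart : ∀ i, ∫ x : EuclideanSpace ℝ (Fin d), x i * fderiv ℝ g x (b i) = -∫ x, g x := by
    intro i
    have hd : ∀ x : EuclideanSpace ℝ (Fin d),
        fderiv ℝ (fun y : EuclideanSpace ℝ (Fin d) => y i) x (b i) = 1 := by
      intro x
      have : HasFDerivAt (fun y : EuclideanSpace ℝ (Fin d) => y i)
          (EuclideanSpace.proj i : EuclideanSpace ℝ (Fin d) →L[ℝ] ℝ) x :=
        (EuclideanSpace.proj i : EuclideanSpace ℝ (Fin d) →L[ℝ] ℝ).hasFDerivAt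
      rw [this.fderiv]
      simp [hb]
    have hgi : Integrable g := hg.continuous.integrable_of_hasCompactSupport hc
    rw [integral_mul_fderiv_eq_neg_fderiv_mul_of_integrable ?_ (hint i) ?_
      (fun x _ => by fun_prop) (fun x _ => hg.differentiable (by simp) x)]
    · simp [hd]
    · simpa [hd] using hgi
    · exact Continuous.integrable_of_hasCompactSupport
        (by have := hg.continuous; fun_prop) hc.mul_left
  simp_rw [hexp]
  rw [integral_finsetSum _ fun i _ => hint i]
  simp [hpart]

/-- Key quantitative step in the compactness proof of the weighted Poincaré inequality:
given a smooth cut-off `χ` supported in `Q = (-1/2, 1/2)^d`, with values in `[0,1]` and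
equal to `1` on `(-1/4, 1/4)^d`, there is a constant `C > 0` (depending only on `d` and `χ`)
such that every `C¹` function `ζ` satisfies
`∫_{(-1/4,1/4)^d} |ζ|² ≤ C (∫_Q |x|²|∇ζ(x)|² dx + ∫_{Q ∖ (-1/4,1/4)^d} |ζ|²)`. -/
theorem cutoff_poincare_step (d : ℕ) (hd : 1 ≤ d)
    (χ : EuclideanSpace ℝ (Fin d) → ℝ)
    (hχ : ContDiff ℝ (⊤ : ℕ∞) χ)
    (hχsupp : tsupport χ ⊆ openCube d (1 / 2))
    (hχrange : ∀ x, χ x ∈ Set.Icc (0 : ℝ) 1)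
    (hχone : ∀ x ∈ openCube d (1 / 4), χ x = 1) :
    ∃ C : ℝ, 0 < C ∧
      ∀ ζ : EuclideanSpace ℝ (Fin d) → ℝ, ContDiff ℝ 1 ζ →
        ∫ x in openCube d (1 / 4), (ζ x) ^ 2
          ≤ C * ((∫ x in openCube d (1 / 2), ‖x‖ ^ 2 * ‖fderiv ℝ ζ x‖ ^ 2)
              + ∫ x in openCube d (1 / 2) \ openCube d (1 / 4), (ζ x) ^ 2) := by
  have hχ1 : ContDiff ℝ 1 χ := hχ.of_le (by exact_mod_cast le_top)
  have hχ' : Continuous (fderiv ℝ χ) := hχ1.continuous_fderiv (by simp)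
  have hχc : Continuous χ := hχ1.continuous
  have hcs : HasCompactSupport χ :=
    (isCompact_closedBall _ _).of_isClosed_subset (isClosed_tsupport χ)
      (hχsupp.trans (openCube_subset_closedBall d _))
  obtain ⟨M, hM⟩ : ∃ M, ∀ x, ‖χ x * fderiv ℝ χ x x‖ ≤ M :=
    Continuous.bounded_above_of_compact_support (by fun_prop) hcs.mul_right
  have hM0 : 0 ≤ M := (norm_nonneg _).trans (hM 0)
  refine ⟨4 + 4 * M, by positivity, fun ζ hζ => ?_⟩
  have hζ' : Continuous (fderiv ℝ ζ) := hζ.continuous_fderiv (by simp)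
  have hζc : Continuous ζ := hζ.continuous
  set Q := openCube d (1 / 2) with hQ
  set q := openCube d (1 / 4) with hq
  have hQm : MeasurableSet Q := (isOpen_openCube d _).measurableSet
  have hqm : MeasurableSet q := (isOpen_openCube d _).measurableSet
  set g : EuclideanSpace ℝ (Fin d) → ℝ := fun x => (χ x * ζ x) ^ 2 with hgdef
  have hg : ContDiff ℝ 1 g := (hχ1.mul hζ).pow 2
  have hgsupp : HasCompactSupport g := by
    have : g = fun x => χ x * (χ x * ζ x ^ 2) := by ext x; simp only [hgdef]; ring
    rw [this]
    exact hcs.mul_right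
  have hgi : Integrable g := hg.continuous.integrable_of_hasCompactSupport hgsupp
  have hDg : Integrable fun x => fderiv ℝ g x x := by
    have hg' : Continuous (fderiv ℝ g) := hg.continuous_fderiv (by simp)
    refine Continuous.integrable_of_hasCompactSupport (by fun_prop) ?_
    exact (hgsupp.fderiv ℝ).mono' fun x hx => subset_tsupport _ fun h => hx (by simp [h])
  have hdiv := integral_fderiv_apply_self hg hgsupp
  set G : EuclideanSpace ℝ (Fin d) → ℝ := fun x => ‖x‖ ^ 2 * ‖fderiv ℝ ζ x‖ ^ 2 with hG
  set Z : EuclideanSpace ℝ (Fin d) → ℝ := fun x => ζ x ^ 2 with hZ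
  have hGi : IntegrableOn G Q := Continuous.integrableOn_openCube (by fun_prop) _
  have hZi : IntegrableOn Z Q := Continuous.integrableOn_openCube (by fun_prop) _
  have hGi' : Integrable (Q.indicator G) := hGi.integrable_indicator hQm
  have hZi' : Integrable ((Q \ q).indicator Z) :=
    (hZi.mono_set sdiff_subset).integrable_indicator (hQm.diff hqm)
  have hderiv : ∀ x, fderiv ℝ g x x =
      2 * (χ x * ζ x) * (χ x * fderiv ℝ ζ x x + ζ x * fderiv ℝ χ x x) := by
    intro x
    have h1 := (hχ1.differentiable (by simp) x).hasFDerivAt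
    have h2 := (hζ.differentiable (by simp) x).hasFDerivAt
    have h3 : HasFDerivAt g _ x := (h1.mul h2).pow 2
    rw [h3.fderiv]
    simp
    ring
  have hpt : ∀ x, -fderiv ℝ g x x - g x / 2
      ≤ 2 * Q.indicator G x + 2 * M * (Q \ q).indicator Z x := by
    intro x
    rw [hderiv]
    by_cases hxQ : x ∈ Q
    · have hop : (fderiv ℝ ζ x x) ^ 2 ≤ G x := by
        have := (fderiv ℝ ζ x).le_opNorm x
        rw [Real.norm_eq_abs] at this
        calc (fderiv ℝ ζ x x) ^ 2 = |fderiv ℝ ζ x x| ^ 2 := (sq_abs _).symm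
          _ ≤ (‖fderiv ℝ ζ x‖ * ‖x‖) ^ 2 := by gcongr
          _ = G x := by simp only [hG]; ring
      have hχsq : χ x ^ 2 ≤ 1 := pow_le_one₀ (hχrange x).1 (hχrange x).2
      have hyoung : -2 * (χ x * ζ x) * (χ x * fderiv ℝ ζ x x) - g x / 2 ≤ 2 * G x := by
        have h1 : χ x ^ 2 * (fderiv ℝ ζ x x) ^ 2 ≤ G x :=
          (mul_le_of_le_one_left (sq_nonneg _) hχsq).trans hop
        simp only [hgdef]
        -- Young's inequality in the form `-2ab ≤ a²/2 + 2b²`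
        nlinarith [sq_nonneg (χ x * ζ x + 2 * (χ x * fderiv ℝ ζ x x))]
      have hcut : -2 * (χ x * ζ x) * (ζ x * fderiv ℝ χ x x)
          ≤ 2 * M * (Q \ q).indicator Z x := by
        by_cases hxq : x ∈ q
        · have h0 : fderiv ℝ χ x = 0 := by
            have : χ =ᶠ[nhds x] fun _ => 1 :=
              Filter.eventually_of_mem ((isOpen_openCube d _).mem_nhds hxq) hχone
            rw [this.fderiv_eq]
            simp
          simp [h0, hxq]
        · rw [Set.indicator_of_mem (show x ∈ Q \ q from ⟨hxQ, hxq⟩)]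
          have := (abs_le.1 (hM x)).1
          simp only [hZ]
          nlinarith [sq_nonneg (ζ x)]
      rw [Set.indicator_of_mem hxQ]
      linarith
    · have h0 : χ x = 0 := image_eq_zero_of_notMem_tsupport fun h => hxQ (hχsupp h)
      simp [hgdef, h0, hxQ]
  have hmono := integral_mono (hDg.neg.sub (hgi.div_const 2))
    ((hGi'.const_mul 2).add (hZi'.const_mul (2 * M))) hpt
  have hL : ∫ x, (-fderiv ℝ g x x - g x / 2) = d * (∫ x, g x) - (∫ x, g x) / 2 := by
    rw [integral_sub (f := fun x => -fderiv ℝ g x x) hDg.neg (hgi.div_const 2), integral_neg, hdiv, integral_div]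
    ring
  have hR : ∫ x, (2 * Q.indicator G x + 2 * M * (Q \ q).indicator Z x)
      = 2 * (∫ x in Q, G x) + 2 * M * ∫ x in Q \ q, Z x := by
    rw [integral_add (hGi'.const_mul 2) (hZi'.const_mul (2 * M)), integral_const_mul,
      integral_const_mul, integral_indicator hQm, integral_indicator (hQm.diff hqm)]
  have hmain : d * (∫ x, g x) - (∫ x, g x) / 2
      ≤ 2 * (∫ x in Q, G x) + 2 * M * ∫ x in Q \ q, Z x := by
    rw [← hL, ← hR]
    exact hmono
  have hsmall : ∫ x in q, Z x ≤ ∫ x, g x := by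
    calc ∫ x in q, Z x = ∫ x in q, g x :=
          setIntegral_congr_fun hqm fun x hx => by simp [hZ, hgdef, hχone x hx]
      _ ≤ ∫ x, g x :=
          setIntegral_le_integral hgi (Filter.Eventually.of_forall fun x => sq_nonneg _)
  have hg0 : 0 ≤ ∫ x, g x := integral_nonneg fun x => sq_nonneg _
  have hG0 : 0 ≤ ∫ x in Q, G x := integral_nonneg fun x => by positivity
  have hZ0 : 0 ≤ ∫ x in Q \ q, Z x := integral_nonneg fun x => sq_nonneg _
  have hd1 : (1 : ℝ) ≤ d := by exact_mod_cast hd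
  have hdg : (∫ x, g x) ≤ d * ∫ x, g x := le_mul_of_one_le_left hg0 hd1
  have hMG : 0 ≤ M * ∫ x in Q, G x := by positivity
  linarith
end
end

section
/- There exists a constant C > 0, depending only on the dimension d ≥ 1, such that for every measurable function f : ℝ^d → ℝ^m that is square-integrable on bounded sets, every real p ≥ 1, and every R ≥ 1, one has ( ⨍_{B_R} ([f]₂(x))^{2p} dx )^{1/p} ≤ C R^{d(1−1/p)} ⨍_{B_{2R}} |f|². -/
/-!
Write `g = |f|²`, `S = ∫_{B_{2R}} g`, `w = |B_1|` and `h(x) = ∫_{B_1(x)} g`, so that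
`[f]₂(x)² = w⁻¹ h(x)`. Since `R ≥ 1`, `B_1(x) ⊆ B_{2R}` for `x ∈ B_R`, which gives the pointwise
bound `h ≤ S` on `B_R`; Fubini gives the integral bound `∫_{B_R} h ≤ w S` (`moving_integral`).
Interpolating between the two,
`∫_{B_R} (w⁻¹ h)^p ≤ (w⁻¹ S)^(p-1) ∫_{B_R} w⁻¹ h ≤ w (w⁻¹ S)^p`.
Dividing by `|B_R| = w R^d` and taking `p`-th roots bounds the left-hand side by
`R^(-d/p) w⁻¹ S`, which equals `2^d R^(d(1-1/p)) ⨍_{B_{2R}} g`. Hence `C = 2^d` works.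
-/

open MeasureTheory Metric Set

noncomputable section

/-- Fubini bound for moving integrals: integrating `x ↦ ∫_{B_1(x)} g` over `B_R` counts each point
of `B_{2R}` with weight at most `|B_1|`. Integrability of the moving integral is part of the
conclusion, because without it the Bochner integral would be the junk value `0`. -/
lemma moving_integral {E : Type*} [NormedAddCommGroup E] [NormedSpace ℝ E]
    [FiniteDimensional ℝ E] [MeasurableSpace E] [BorelSpace E]
    (μ : Measure E) [μ.IsAddHaarMeasure] (g : E → ℝ) (hg0 : ∀ x, 0 ≤ g x) {R : ℝ} (hR : 1 ≤ R)
    (hg : IntegrableOn g (ball 0 (2 * R)) μ) :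
    IntegrableOn (fun x => ∫ y in ball x 1, g y ∂μ) (ball 0 R) μ ∧
      ∫ x in ball 0 R, (∫ y in ball x 1, g y ∂μ) ∂μ
        ≤ μ.real (ball 0 1) * ∫ y in ball 0 (2 * R), g y ∂μ := by
  have hfinite : ∀ r : ℝ, IsFiniteMeasure (μ.restrict (ball (0 : E) r)) := fun r =>
    ⟨by rw [Measure.restrict_apply_univ]; exact measure_ball_lt_top⟩
  have := hfinite R
  have := hfinite (2 * R)
  -- Kernel whose section at `x ∈ B_R`, integrated over `B_{2R}`, is the moving integral of `g`.
  set K : E × E → ℝ := indicator {q | dist q.2 q.1 < 1} (fun q => g q.2) with hK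
  have hS : MeasurableSet {q : E × E | dist q.2 q.1 < 1} :=
    (isOpen_lt (by fun_prop) continuous_const).measurableSet
  have hKint : Integrable K ((μ.restrict (ball 0 R)).prod (μ.restrict (ball 0 (2 * R)))) :=
    (Integrable.comp_snd (f := g) hg _).indicator hS
  have hsec : ∀ x ∈ ball (0 : E) R,
      ∫ y in ball 0 (2 * R), K (x, y) ∂μ = ∫ y in ball x 1, g y ∂μ := by
    intro x hx
    have h1 : (fun y => K (x, y)) = indicator (ball x 1) g := by
      ext y; simp [hK, indicator, mem_ball]
    have h2 : ball x 1 ⊆ ball (0 : E) (2 * R) :=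
      ball_subset_ball' (by rw [mem_ball] at hx; linarith)
    rw [h1, setIntegral_indicator measurableSet_ball, inter_eq_self_of_subset_right h2]
  have hle : ∀ y, ∫ x in ball 0 R, K (x, y) ∂μ ≤ μ.real (ball 0 1) * g y := by
    intro y
    have h1 : (fun x => K (x, y)) = indicator (ball y 1) (fun _ => g y) := by
      ext x; simp [hK, indicator, mem_ball, dist_comm]
    rw [h1, setIntegral_indicator measurableSet_ball, setIntegral_const, smul_eq_mul]
    have h2 : μ.real (ball 0 1) = μ.real (ball y 1) := by
      simp only [measureReal_def, Measure.addHaar_ball_center μ y 1]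
    rw [h2]
    exact mul_le_mul_of_nonneg_right
      (measureReal_mono inter_subset_right measure_ball_lt_top.ne) (hg0 y)
  refine ⟨?_, ?_⟩
  · exact IntegrableOn.congr_fun (f := fun x => ∫ y in ball 0 (2 * R), K (x, y) ∂μ)
      hKint.integral_prod_left hsec measurableSet_ball
  · rw [← setIntegral_congr_fun measurableSet_ball hsec,
      integral_integral_swap (f := fun x y => K (x, y)) hKint, ← integral_const_mul]
    exact integral_mono hKint.integral_prod_right (hg.const_mul _) hle

/-- Discrete `ℓ¹`–`ℓ^p` (reverse Jensen) inequality: there is `C > 0` depending only on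
`d ≥ 1` such that for every `f : ℝ^d → ℝ^m` measurable and square-integrable on bounded
sets, every `p ≥ 1` and every `R ≥ 1`,
`(⨍_{B_R} ([f]₂(x))^{2p} dx)^{1/p} ≤ C R^{d(1-1/p)} ⨍_{B_{2R}} |f|²`,
where `[f]₂(x) = (⨍_{B_1(x)} |f|²)^{1/2}` is the local moving quadratic average. -/
theorem reverse_jensen (d m : ℕ) (hd : 1 ≤ d) :
    ∃ C : ℝ, 0 < C ∧
      ∀ f : EuclideanSpace ℝ (Fin d) → EuclideanSpace ℝ (Fin m), Measurable f →
        (∀ R : ℝ, IntegrableOn (fun x => ‖f x‖ ^ 2)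
          (Metric.ball (0 : EuclideanSpace ℝ (Fin d)) R)) →
        ∀ p : ℝ, 1 ≤ p → ∀ R : ℝ, 1 ≤ R →
          (⨍ x in Metric.ball (0 : EuclideanSpace ℝ (Fin d)) R,
              ((⨍ y in Metric.ball x 1, ‖f y‖ ^ 2) ^ (1 / 2 : ℝ)) ^ (2 * p)) ^ (1 / p)
            ≤ C * R ^ ((d : ℝ) * (1 - 1 / p))
              * ⨍ x in Metric.ball (0 : EuclideanSpace ℝ (Fin d)) (2 * R), ‖f x‖ ^ 2 := by
  refine ⟨2 ^ d, by positivity, fun f _ hf p hp R hR => ?_⟩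
  set g : EuclideanSpace ℝ (Fin d) → ℝ := fun x => ‖f x‖ ^ 2 with hgdef
  have hg0 : ∀ x, 0 ≤ g x := fun x => by positivity
  obtain ⟨hint, hbound⟩ := moving_integral volume g hg0 hR (hf (2 * R))
  set w : ℝ := volume.real (ball (0 : EuclideanSpace ℝ (Fin d)) 1) with hw
  set S : ℝ := ∫ y in ball 0 (2 * R), g y with hS
  have hR0 : 0 < R := by linarith
  have hp0 : 0 < p := by linarith
  have hw0 : 0 < w := ENNReal.toReal_pos (measure_ball_pos _ _ one_pos).ne' measure_ball_lt_top.ne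
  have hS0 : 0 ≤ S := integral_nonneg hg0
  have hvol : ∀ (x : EuclideanSpace ℝ (Fin d)) (r : ℝ), 0 < r →
      volume.real (ball x r) = r ^ d * w := by
    intro x r hr
    rw [measureReal_def, Measure.addHaar_ball_of_pos _ _ hr, ENNReal.toReal_mul,
      ENNReal.toReal_ofReal (by positivity), finrank_euclideanSpace_fin, hw, measureReal_def]
  set h : EuclideanSpace ℝ (Fin d) → ℝ := fun x => ∫ y in ball x 1, g y with hh
  have hh0 : ∀ x, 0 ≤ h x := fun x => integral_nonneg hg0
  have hhS : ∀ x ∈ ball (0 : EuclideanSpace ℝ (Fin d)) R, h x ≤ S := fun x hx =>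
    setIntegral_mono_set (hf _) (Filter.Eventually.of_forall hg0)
      (LE.le.eventuallyLE
        (ball_subset_ball' (by rw [mem_ball] at hx; linarith)))
  have hav : ∀ x, ((⨍ y in ball x 1, g y) ^ (1 / 2 : ℝ)) ^ (2 * p) = (w⁻¹ * h x) ^ p := by
    intro x
    rw [setAverage_eq, hvol x 1 one_pos, one_pow, one_mul, smul_eq_mul,
      ← Real.rpow_mul (mul_nonneg (by positivity) (hh0 x))]
    congr 1; ring
  simp_rw [hav]
  rw [setAverage_eq, setAverage_eq, hvol _ _ hR0, hvol _ _ (by linarith : 0 < 2 * R),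
    smul_eq_mul, smul_eq_mul]
  -- Spend the sup bound on `p - 1` powers, so that the remaining factor is linear in `h`.
  have hpt : ∀ x ∈ ball (0 : EuclideanSpace ℝ (Fin d)) R,
      (w⁻¹ * h x) ^ p ≤ (w⁻¹ * S) ^ (p - 1) * (w⁻¹ * h x) := by
    intro x hx
    have h0 : 0 ≤ w⁻¹ * h x := mul_nonneg (by positivity) (hh0 x)
    calc (w⁻¹ * h x) ^ p = (w⁻¹ * h x) ^ (p - 1) * (w⁻¹ * h x) := by
          rw [← Real.rpow_add_one' h0 (by linarith), sub_add_cancel]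
      _ ≤ _ := by
          have := hhS x hx
          gcongr
  have hmain : ∫ x in ball (0 : EuclideanSpace ℝ (Fin d)) R, (w⁻¹ * h x) ^ p
      ≤ w * (w⁻¹ * S) ^ p := by
    calc _ ≤ ∫ x in ball (0 : EuclideanSpace ℝ (Fin d)) R,
            (w⁻¹ * S) ^ (p - 1) * (w⁻¹ * h x) := by
          refine integral_mono_of_nonneg
            (Filter.Eventually.of_forall fun x => Real.rpow_nonneg
              (mul_nonneg (by positivity) (hh0 x)) _)
            ((hint.const_mul _).const_mul _) ?_
          filter_upwards [ae_restrict_mem measurableSet_ball] with x hx using hpt x hx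
      _ = (w⁻¹ * S) ^ (p - 1) * (w⁻¹ * ∫ x in ball 0 R, h x) := by
          rw [integral_const_mul, integral_const_mul]
      _ ≤ (w⁻¹ * S) ^ (p - 1) * (w⁻¹ * (w * S)) := by gcongr
      _ = w * ((w⁻¹ * S) ^ (p - 1) * (w⁻¹ * S)) := by ring
      _ = w * (w⁻¹ * S) ^ p := by
          rw [← Real.rpow_add_one' (by positivity) (by linarith), sub_add_cancel]
  calc ((R ^ d * w)⁻¹ * ∫ x in ball 0 R, (w⁻¹ * h x) ^ p) ^ (1 / p)
      ≤ ((R ^ d * w)⁻¹ * (w * (w⁻¹ * S) ^ p)) ^ (1 / p) := by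
        refine Real.rpow_le_rpow (mul_nonneg (by positivity) (integral_nonneg fun x =>
          Real.rpow_nonneg (mul_nonneg (by positivity) (hh0 x)) _)) ?_ (by positivity)
        gcongr
    _ = (R ^ (-(d : ℝ)) * (w⁻¹ * S) ^ p) ^ (1 / p) := by
        rw [Real.rpow_neg hR0.le, Real.rpow_natCast]
        congr 1; field_simp
    _ = R ^ (-(d : ℝ) * (1 / p)) * (w⁻¹ * S) := by
        rw [Real.mul_rpow (by positivity) (by positivity), ← Real.rpow_mul hR0.le,
          ← Real.rpow_mul (by positivity), mul_one_div_cancel hp0.ne', Real.rpow_one]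
    _ = 2 ^ d * R ^ ((d : ℝ) * (1 - 1 / p)) * (((2 * R) ^ d * w)⁻¹ * S) := by
        rw [show (d : ℝ) * (1 - 1 / p) = d + -(d : ℝ) * (1 / p) by ring,
          Real.rpow_add hR0, Real.rpow_natCast, mul_pow]
        field_simp
    _ ≤ _ := le_rfl
end
end

section
/- There exists a constant C > 0, depending only on the dimension d ≥ 1, such that for every integrable function h : ℝ^d → ℝ and every R > 0, one has | ∫_{B_R} ∫_{B_R} h(x − y) dy dx − |B_R| ∫_{ℝ^d} h | ≤ C R^d ∫_{ℝ^d} min(1, |z|/R) |h(z)| dz. -/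
/-!
Substituting `z = x - y` in the inner integral, the difference of the two terms is, up to sign,
the integral of `h z` over the pairs `(x, z)` with `x ∈ B_R` and `x - z ∉ B_R`. By Fubini its
absolute value is at most `∫ |h z| · |{x ∈ B_R | x - z ∉ B_R}| dz`. Such an `x` satisfies
`R - |z| ≤ |x| < R`, so it lies in a shell of volume `(R ^ d - (R - |z|) ^ d) |B_1|` when `|z| ≤ R`,
and Bernoulli's inequality bounds this by `d |B_1| R ^ d · |z| / R`. For `|z| > R` the trivial bound
`|B_R|` suffices. Hence `C = d |B_1|` works.
-/

open MeasureTheory Metric Set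

noncomputable section

lemma volume_real_ball_eq (d : ℕ) {r : ℝ} (hr : 0 ≤ r) (hd : 1 ≤ d) :
    volume.real (ball (0 : EuclideanSpace ℝ (Fin d)) r)
      = r ^ d * volume.real (ball (0 : EuclideanSpace ℝ (Fin d)) 1) := by
  haveI : Nonempty (Fin d) := ⟨⟨0, hd⟩⟩
  rw [measureReal_def, measureReal_def, Measure.addHaar_ball _ _ hr, ENNReal.toReal_mul,
    ENNReal.toReal_ofReal (by positivity), finrank_euclideanSpace_fin]

/-- The part of `B_R` outside its translate `B_R + z` has volume at most
`d |B_1| R ^ d min(1, |z| / R)`. -/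
lemma volume_shell_le (d : ℕ) (hd : 1 ≤ d) {R : ℝ} (hR : 0 < R) (z : EuclideanSpace ℝ (Fin d)) :
    volume.real (ball (0 : EuclideanSpace ℝ (Fin d)) R ∩ {x | x - z ∉ ball 0 R})
      ≤ d * volume.real (ball (0 : EuclideanSpace ℝ (Fin d)) 1) * R ^ d * min 1 (‖z‖ / R) := by
  have hd' : (1 : ℝ) ≤ d := by exact_mod_cast hd
  have hω : 0 ≤ volume.real (ball (0 : EuclideanSpace ℝ (Fin d)) 1) := measureReal_nonneg
  have hB := volume_real_ball_eq d hR.le hd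
  have hRd : 0 < R ^ d := by positivity
  rcases le_total 1 (‖z‖ / R) with h1 | h1
  · rw [min_eq_left h1]
    refine (measureReal_mono inter_subset_left measure_ball_lt_top.ne).trans ?_
    rw [hB]
    nlinarith [mul_nonneg (sub_nonneg.2 hd') (mul_nonneg hω hRd.le)]
  · rw [min_eq_right h1]
    set t := ‖z‖ / R with ht
    have hz : ‖z‖ = R * t := by rw [ht]; field_simp
    have hr : 0 ≤ R * (1 - t) := mul_nonneg hR.le (by linarith)
    have ht0 : 0 ≤ t := by positivity
    have hsub : ball (0 : EuclideanSpace ℝ (Fin d)) R ∩ {x | x - z ∉ ball 0 R}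
        ⊆ ball 0 R \ ball 0 (R * (1 - t)) := by
      rintro x ⟨hx, hxz⟩
      refine ⟨hx, fun hx' => hxz ?_⟩
      rw [mem_ball_zero_iff] at *
      have := norm_sub_le x z
      linarith
    refine (measureReal_mono hsub (measure_ne_top_of_subset diff_subset
      measure_ball_lt_top.ne)).trans ?_
    rw [measureReal_diff (ball_subset_ball (by nlinarith)) measurableSet_ball
      measure_ball_lt_top.ne,
      hB, volume_real_ball_eq d hr hd, mul_pow]
    have hbern := one_add_mul_le_pow (a := -t) (by linarith) d
    rw [← sub_eq_add_neg] at hbern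
    nlinarith [mul_le_mul_of_nonneg_left hbern (mul_nonneg hω hRd.le)]

/-- Analytic core of the density-fluctuation lemma: there is `C > 0` depending only on
`d ≥ 1` such that for every integrable `h : ℝ^d → ℝ` and every `R > 0`,
`|∫_{B_R} ∫_{B_R} h(x − y) dy dx − |B_R| ∫_{ℝ^d} h| ≤ C R^d ∫_{ℝ^d} min(1, |z|/R) |h(z)| dz`. -/
theorem number_variance_estimate (d : ℕ) (hd : 1 ≤ d) :
    ∃ C : ℝ, 0 < C ∧
      ∀ h : EuclideanSpace ℝ (Fin d) → ℝ, Integrable h → ∀ R : ℝ, 0 < R →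
        |(∫ x in Metric.ball (0 : EuclideanSpace ℝ (Fin d)) R,
              ∫ y in Metric.ball (0 : EuclideanSpace ℝ (Fin d)) R, h (x - y))
            - (volume (Metric.ball (0 : EuclideanSpace ℝ (Fin d)) R)).toReal
              * ∫ z : EuclideanSpace ℝ (Fin d), h z|
          ≤ C * R ^ d * ∫ z : EuclideanSpace ℝ (Fin d), min 1 (‖z‖ / R) * |h z| := by
  have hω : 0 < volume.real (ball (0 : EuclideanSpace ℝ (Fin d)) 1) :=
    ENNReal.toReal_pos (measure_ball_pos _ _ one_pos).ne' measure_ball_lt_top.ne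
  have hd' : (0 : ℝ) < d := by exact_mod_cast hd
  refine ⟨d * volume.real (ball (0 : EuclideanSpace ℝ (Fin d)) 1), by positivity, ?_⟩
  intro h hh R hR
  set B := ball (0 : EuclideanSpace ℝ (Fin d)) R with hBdef
  have hBm : MeasurableSet B := measurableSet_ball
  set μ : Measure (EuclideanSpace ℝ (Fin d)) := volume.restrict B with hμ
  haveI : IsFiniteMeasure μ := ⟨by rw [hμ, Measure.restrict_apply_univ]; exact measure_ball_lt_top⟩
  let S : Set (EuclideanSpace ℝ (Fin d) × EuclideanSpace ℝ (Fin d)) := {p | p.1 - p.2 ∈ B}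
  have hS : MeasurableSet S := (measurable_fst.sub measurable_snd) hBm
  have hint : Integrable (fun p : EuclideanSpace ℝ (Fin d) × EuclideanSpace ℝ (Fin d) => h p.2)
      (μ.prod volume) := hh.comp_snd μ
  have hG := hint.indicator hS.compl
  have hF := hint.indicator hS
  have inner : ∀ x, ∫ y in B, h (x - y)
      = ∫ z, S.indicator (fun p => h p.2) (x, z) := by
    intro x
    rw [← integral_indicator hBm, ← integral_sub_left_eq_self _ volume x]
    congr 1
    ext z
    simp [S, indicator]
  have key : (∫ x in B, ∫ y in B, h (x - y)) - (volume B).toReal * ∫ z, h z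
      = - ∫ p, Sᶜ.indicator (fun p => h p.2) p ∂(μ.prod volume) := by
    have e1 : (∫ x in B, ∫ y in B, h (x - y))
        = ∫ p, S.indicator (fun p => h p.2) p ∂(μ.prod volume) := by
      rw [integral_prod _ hF]
      exact integral_congr_ae (Filter.Eventually.of_forall inner)
    have e2 : (volume B).toReal * ∫ z, h z = ∫ p, h p.2 ∂(μ.prod volume) := by
      rw [integral_prod _ hint]
      simp [hμ, measureReal_def]
    rw [e1, e2, integral_indicator hS, integral_indicator hS.compl,
      ← integral_add_compl hS hint]
    ring
  rw [key, abs_neg]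
  refine (abs_integral_le_integral_abs).trans ?_
  rw [integral_prod_symm _ hG.abs, ← integral_const_mul]
  have hmin : Integrable (fun z : EuclideanSpace ℝ (Fin d) => min 1 (‖z‖ / R) * |h z|) := by
    refine hh.abs.bdd_mul (c := 1) (by fun_prop) (Filter.Eventually.of_forall fun z => ?_)
    rw [Real.norm_of_nonneg (by positivity)]
    exact min_le_left _ _
  refine integral_mono hG.abs.integral_prod_right (hmin.const_mul _) fun z => ?_
  have hSz : MeasurableSet {x : EuclideanSpace ℝ (Fin d) | x - z ∉ B} :=
    ((measurable_id.sub_const z) hBm).compl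
  have e : ∀ x, |Sᶜ.indicator (fun p => h p.2) (x, z)|
      = {x : EuclideanSpace ℝ (Fin d) | x - z ∉ B}.indicator (fun _ => |h z|) x := by
    intro x
    by_cases hx : x - z ∈ B <;> simp [S, hx]
  simp only [e]
  rw [integral_indicator_const _ hSz, hμ, measureReal_restrict_apply hSz, inter_comm, smul_eq_mul,
    ← mul_assoc]
  exact mul_le_mul_of_nonneg_right (volume_shell_le d hd hR z) (abs_nonneg _)
end
end

section
/- There exists a constant C > 0, depending only on the dimension d ≥ 1, such that the following holds: if h : ℝ^d → ℝ is integrable with ∫_{ℝ^d} |z| |h(z)| dz < ∞ and ∫_{ℝ^d} h = 0, then for every R > 0 one has | ∫_{B_R} ∫_{B_R} h(x − y) dy dx | ≤ C R^{d−1} ∫_{ℝ^d} |z| |h(z)| dz. -/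
/-!
Fix `x ∈ B_R`. Since `∫ h = 0`, the inner integral `∫_{y ∈ B_R} h (x - y)` equals
`-∫ h z` over the `z` with `x - z ∉ B_R` (`enorm_inner_integral_le` bounds it accordingly).
By Tonelli the double integral is therefore at most
`∫ |h z| · vol {x ∈ B_R | x - z ∉ B_R} dz`. The set in question lies in the shell
`B_R \ B_{R - |z|}`, whose volume is at most `d ω_d R^{d-1} |z|` by Bernoulli's inequality
(`volume_overhang_le`), so `C = d ω_d` works, with `ω_d` the volume of the unit ball.
-/

open MeasureTheory Metric Set

noncomputable section

/-- Bernoulli's inequality for `(1 - t / R) ^ d`, multiplied by `R ^ d`; for `t ≥ R` the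
inequality is trivial. -/
lemma pow_shell_le (d : ℕ) (hd : 1 ≤ d) {R t : ℝ} (hR : 0 < R) (ht : 0 ≤ t) :
    R ^ d - (max (R - t) 0) ^ d ≤ d * R ^ (d - 1) * t := by
  obtain ⟨n, rfl⟩ : ∃ n, d = n + 1 := ⟨d - 1, by omega⟩
  have hP : 0 < R ^ n := pow_pos hR n
  simp only [Nat.add_sub_cancel]
  rcases le_total t R with h | h
  · rw [max_eq_left (by linarith)]
    have hs : -2 ≤ -(t / R) := by
      have : t / R ≤ 1 := (div_le_one hR).2 h
      linarith
    have key := one_add_mul_le_pow hs (n + 1)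
    have e : (R - t) ^ (n + 1) = R ^ (n + 1) * (1 + -(t / R)) ^ (n + 1) := by
      rw [← mul_pow]; congr 1; field_simp; ring
    have key2 := mul_le_mul_of_nonneg_left key (pow_pos hR (n + 1)).le
    rw [← e] at key2
    have e2 : R ^ (n + 1) * (1 + ((n + 1 : ℕ) : ℝ) * -(t / R))
        = R ^ (n + 1) - ((n + 1 : ℕ) : ℝ) * R ^ n * t := by
      rw [pow_succ]; field_simp; ring
    linarith
  · rw [max_eq_right (by linarith), zero_pow (by omega), pow_succ]
    push_cast
    have h1 : R ^ n * R ≤ R ^ n * t := mul_le_mul_of_nonneg_left h hP.le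
    have h2 : 0 ≤ (n : ℝ) * (R ^ n * t) := by positivity
    linarith

/-- The part of `B_R` that a translation by `-z` moves out of `B_R` has volume
`O(R^{d-1} |z|)`, because it is contained in the shell `B_R \ B_{R - |z|}`. -/
lemma volume_overhang_le (d : ℕ) (hd : 1 ≤ d) {R : ℝ} (hR : 0 < R)
    (z : EuclideanSpace ℝ (Fin d)) :
    volume (ball (0 : EuclideanSpace ℝ (Fin d)) R ∩ {x | R ≤ ‖x - z‖}) ≤
      ENNReal.ofReal (d * volume.real (ball (0 : EuclideanSpace ℝ (Fin d)) 1)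
        * R ^ (d - 1) * ‖z‖) := by
  have : Nonempty (Fin d) := ⟨⟨0, hd⟩⟩
  -- truncating the inner radius at `0` covers the case `|z| > R`
  set r : ℝ := max (R - ‖z‖) 0 with hr
  have hr0 : 0 ≤ r := le_max_right _ _
  have hrR : r ≤ R := max_le (by linarith [norm_nonneg z]) hR.le
  have hsub : ball (0 : EuclideanSpace ℝ (Fin d)) R ∩ {x | R ≤ ‖x - z‖}
      ⊆ ball 0 R \ ball 0 r := by
    rintro x ⟨hx, hxz⟩
    refine ⟨hx, fun hxr => ?_⟩
    simp only [mem_ball_zero_iff, mem_ofPred_eq] at hx hxz hxr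
    have h1 := norm_sub_le x z
    rcases lt_max_iff.1 hxr with h | h
    · linarith
    · linarith [norm_nonneg x]
  refine (measure_mono hsub).trans ?_
  have hvol : ∀ s : ℝ, 0 ≤ s → volume.real (ball (0 : EuclideanSpace ℝ (Fin d)) s)
      = s ^ d * volume.real (ball (0 : EuclideanSpace ℝ (Fin d)) 1) := by
    intro s hs
    rw [measureReal_def, Measure.addHaar_ball _ _ hs, ENNReal.toReal_mul,
      ENNReal.toReal_ofReal (by positivity), finrank_euclideanSpace_fin, measureReal_def]
  rw [← ENNReal.ofReal_toReal (a := volume (ball (0 : EuclideanSpace ℝ (Fin d)) R \ ball 0 r))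
    ((measure_mono sdiff_subset).trans_lt measure_ball_lt_top).ne]
  apply ENNReal.ofReal_le_ofReal
  change volume.real _ ≤ _
  rw [measureReal_sdiff (ball_subset_ball hrR) measurableSet_ball measure_ball_lt_top.ne,
    hvol R hR.le, hvol r hr0]
  have := mul_le_mul_of_nonneg_right (pow_shell_le d hd hR (norm_nonneg z))
    (measureReal_nonneg (μ := volume) (s := ball (0 : EuclideanSpace ℝ (Fin d)) 1))
  rw [← hr] at this
  linarith

/-- Because `∫ h = 0`, the integral of `h (x - ·)` over `B_R` is minus its integral over the
complement of `B_R`. -/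
lemma enorm_inner_integral_le {d : ℕ} {h : EuclideanSpace ℝ (Fin d) → ℝ} (hi : Integrable h)
    (h0 : (∫ z, h z) = 0) (R : ℝ) (x : EuclideanSpace ℝ (Fin d)) :
    ‖∫ y in ball (0 : EuclideanSpace ℝ (Fin d)) R, h (x - y)‖ₑ ≤
      ∫⁻ z, {z | R ≤ ‖x - z‖}.indicator (fun z => ‖h z‖ₑ) z := by
  have hS : MeasurableSet {z : EuclideanSpace ℝ (Fin d) | R ≤ ‖x - z‖} :=
    (isClosed_le continuous_const (by fun_prop)).measurableSet
  have e : (∫ y in ball (0 : EuclideanSpace ℝ (Fin d)) R, h (x - y))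
      = ∫ z in {z | R ≤ ‖x - z‖}ᶜ, h z := by
    rw [← integral_indicator measurableSet_ball, ← integral_indicator hS.compl,
      ← integral_sub_left_eq_self ({z | R ≤ ‖x - z‖}ᶜ.indicator h) volume x]
    congr 1
    ext y
    simp [indicator]
  have hadd := integral_add_compl hS hi
  rw [h0] at hadd
  rw [e, eq_neg_of_add_eq_zero_right hadd, enorm_neg, lintegral_indicator hS]
  exact enorm_integral_le_lintegral_enorm _

/-- Number variance bound under hyperuniformity: there is `C > 0` depending only on
`d ≥ 1` such that if `h : ℝ^d → ℝ` is integrable, `∫ |z| |h(z)| dz < ∞`, and `∫ h = 0`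
(vanishing structure factor at zero), then for every `R > 0`,
`|∫_{B_R} ∫_{B_R} h(x − y) dy dx| ≤ C R^{d−1} ∫_{ℝ^d} |z| |h(z)| dz`. -/
theorem hyperuniform_number_variance (d : ℕ) (hd : 1 ≤ d) :
    ∃ C : ℝ, 0 < C ∧
      ∀ h : EuclideanSpace ℝ (Fin d) → ℝ, Integrable h →
        Integrable (fun z : EuclideanSpace ℝ (Fin d) => ‖z‖ * |h z|) →
        (∫ z : EuclideanSpace ℝ (Fin d), h z) = 0 →
        ∀ R : ℝ, 0 < R →
          |∫ x in Metric.ball (0 : EuclideanSpace ℝ (Fin d)) R,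
              ∫ y in Metric.ball (0 : EuclideanSpace ℝ (Fin d)) R, h (x - y)|
            ≤ C * R ^ (d - 1) * ∫ z : EuclideanSpace ℝ (Fin d), ‖z‖ * |h z| := by
  have hω : 0 < volume.real (ball (0 : EuclideanSpace ℝ (Fin d)) 1) :=
    ENNReal.toReal_pos (measure_ball_pos _ _ one_pos).ne' measure_ball_lt_top.ne
  have hd' : (0 : ℝ) < d := by exact_mod_cast hd
  refine ⟨d * volume.real (ball (0 : EuclideanSpace ℝ (Fin d)) 1), by positivity, ?_⟩
  intro h hi hm h0 R hR
  set K : ℝ := d * volume.real (ball (0 : EuclideanSpace ℝ (Fin d)) 1) * R ^ (d - 1) with hK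
  have hK0 : 0 ≤ K := by positivity
  rw [← integral_const_mul]
  have hnn : ∀ z : EuclideanSpace ℝ (Fin d), 0 ≤ K * (‖z‖ * |h z|) := fun z => by positivity
  rw [← ENNReal.ofReal_le_ofReal_iff (integral_nonneg hnn),
    ofReal_integral_eq_lintegral_ofReal (hm.const_mul K) (Filter.Eventually.of_forall hnn),
    ← Real.enorm_eq_ofReal_abs]
  have hT : MeasurableSet
      {p : EuclideanSpace ℝ (Fin d) × EuclideanSpace ℝ (Fin d) | R ≤ ‖p.1 - p.2‖} :=
    (isClosed_le continuous_const (by fun_prop)).measurableSet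
  calc ‖∫ x in ball (0 : EuclideanSpace ℝ (Fin d)) R,
          ∫ y in ball (0 : EuclideanSpace ℝ (Fin d)) R, h (x - y)‖ₑ
      ≤ ∫⁻ x in ball (0 : EuclideanSpace ℝ (Fin d)) R,
          ‖∫ y in ball (0 : EuclideanSpace ℝ (Fin d)) R, h (x - y)‖ₑ :=
        enorm_integral_le_lintegral_enorm _
    _ ≤ ∫⁻ x in ball (0 : EuclideanSpace ℝ (Fin d)) R,
          ∫⁻ z, {z | R ≤ ‖x - z‖}.indicator (fun z => ‖h z‖ₑ) z :=
        lintegral_mono fun x => enorm_inner_integral_le hi h0 R x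
    _ = ∫⁻ z, ∫⁻ x in ball (0 : EuclideanSpace ℝ (Fin d)) R,
          {z | R ≤ ‖x - z‖}.indicator (fun z => ‖h z‖ₑ) z := by
        apply lintegral_lintegral_swap
        exact (hi.aestronglyMeasurable.enorm.comp_snd).indicator hT
    _ ≤ ∫⁻ z, ENNReal.ofReal (K * (‖z‖ * |h z|)) := by
        refine lintegral_mono fun z => ?_
        have hS : MeasurableSet {x : EuclideanSpace ℝ (Fin d) | R ≤ ‖x - z‖} :=
          (isClosed_le continuous_const (by fun_prop)).measurableSet
        -- for fixed `z` the integrand is a constant times an indicator in `x`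
        have e : ∀ x, {z | R ≤ ‖x - z‖}.indicator (fun z => ‖h z‖ₑ) z
            = {x | R ≤ ‖x - z‖}.indicator (fun _ => ‖h z‖ₑ) x := fun x => by
          simp [indicator]
        simp_rw [e]
        rw [lintegral_indicator_const hS, Measure.restrict_apply hS, inter_comm,
          ← mul_assoc, ENNReal.ofReal_mul (by positivity), mul_comm, Real.enorm_eq_ofReal_abs]
        gcongr
        exact volume_overhang_le d hd hR z
end
end

section
/- Let g : ℝ^d → ℝ be measurable with ∫_{ℝ^d} |z|² |g(z)| dz < ∞, and let ζ : ℝ^d → ℝ be a continuously differentiable function with compact support. Then ∬_{ℝ^d×ℝ^d} (ζ(x) − ζ(y))² |g(x − y)| dx dy ≤ ( ∫_{ℝ^d} |z|² |g(z)| dz ) · ∫_{ℝ^d} |∇ζ|². -/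
/-!
Writing `ζ(y + z) - ζ(y) = ∫₀¹ ∇ζ(y + tz) · z dt` and applying Jensen's inequality gives
`(ζ(y + z) - ζ(y))² ≤ |z|² ∫₀¹ |∇ζ(y + tz)|² dt`. Integrating in `y`, Tonelli's theorem and
translation invariance remove the dependence on `t`:
`∫ (ζ(y + z) - ζ(y))² dy ≤ |z|² ∫ |∇ζ|²` (`lintegral_sq_sub_translate_le`).
The theorem follows by the change of variables `x = y + z` and integration against `|g(z)| dz`.
The estimates are carried out with `ℝ≥0∞`-valued integrals, so that Tonelli's theorem needs only
measurability; the moment hypothesis and the compact support of `ζ` give finiteness at the end.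
-/

open MeasureTheory Metric Set

noncomputable section

/-- Jensen's inequality for the line integral of the gradient along the segment `[y, y + z]`. -/
lemma sq_sub_translate_le {E : Type*} [NormedAddCommGroup E] [NormedSpace ℝ E]
    {ζ : E → ℝ} (hζ : ContDiff ℝ 1 ζ) (y z : E) :
    (ζ (y + z) - ζ y) ^ 2 ≤ ∫ t in Ioc (0 : ℝ) 1, ‖z‖ ^ 2 * ‖fderiv ℝ ζ (y + t • z)‖ ^ 2 := by
  have hc : Continuous (fun t : ℝ => fderiv ℝ ζ (y + t • z)) :=
    (hζ.continuous_fderiv one_ne_zero).comp (by fun_prop)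
  have hcz : Continuous (fun t : ℝ => fderiv ℝ ζ (y + t • z) z) := hc.clm_apply continuous_const
  have hderiv : ∀ t : ℝ, HasDerivAt (fun t : ℝ => ζ (y + t • z)) (fderiv ℝ ζ (y + t • z) z) t := by
    intro t
    have h1 : HasDerivAt (fun t : ℝ => y + t • z) z t := by
      simpa using ((hasDerivAt_id t).smul_const z).const_add y
    exact ((hζ.differentiable one_ne_zero) (y + t • z)).hasFDerivAt.comp_hasDerivAt t h1
  have hftc : ∫ t in (0 : ℝ)..1, fderiv ℝ ζ (y + t • z) z = ζ (y + z) - ζ y := by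
    rw [intervalIntegral.integral_eq_sub_of_hasDerivAt (fun t _ => hderiv t)
      (hcz.intervalIntegrable _ _)]
    simp
  rw [intervalIntegral.integral_of_le zero_le_one] at hftc
  have : IsProbabilityMeasure (volume.restrict (Ioc (0 : ℝ) 1)) := ⟨by simp⟩
  have hint : ∀ {f : ℝ → ℝ}, Continuous f → IntegrableOn f (Ioc (0 : ℝ) 1) := fun hf =>
    (hf.integrableOn_Icc).mono_set Ioc_subset_Icc_self
  have hjensen := (even_two.convexOn_pow (𝕜 := ℝ)).map_integral_le
    (μ := volume.restrict (Ioc (0 : ℝ) 1)) (f := fun t : ℝ => fderiv ℝ ζ (y + t • z) z)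
    (continuous_pow 2).continuousOn isClosed_univ (by simp) (hint hcz) (hint (hcz.pow 2))
  rw [hftc] at hjensen
  refine hjensen.trans (integral_mono (hint (hcz.pow 2)) (hint (by fun_prop)) fun t => ?_)
  have h := (fderiv ℝ ζ (y + t • z)).le_opNorm z
  calc (fderiv ℝ ζ (y + t • z) z) ^ 2 = ‖fderiv ℝ ζ (y + t • z) z‖ ^ 2 := by simp
    _ ≤ (‖fderiv ℝ ζ (y + t • z)‖ * ‖z‖) ^ 2 := by gcongr
    _ = ‖z‖ ^ 2 * ‖fderiv ℝ ζ (y + t • z)‖ ^ 2 := by ring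

lemma lintegral_sq_sub_translate_le {d : ℕ} {ζ : EuclideanSpace ℝ (Fin d) → ℝ}
    (hζ : ContDiff ℝ 1 ζ) (z : EuclideanSpace ℝ (Fin d)) :
    ∫⁻ y, ENNReal.ofReal ((ζ (z + y) - ζ y) ^ 2)
      ≤ ENNReal.ofReal (‖z‖ ^ 2) * ∫⁻ x, ENNReal.ofReal (‖fderiv ℝ ζ x‖ ^ 2) := by
  have hf : Continuous (fderiv ℝ ζ) := hζ.continuous_fderiv one_ne_zero
  calc ∫⁻ y, ENNReal.ofReal ((ζ (z + y) - ζ y) ^ 2)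
      ≤ ∫⁻ y, ∫⁻ t in Ioc (0 : ℝ) 1,
          ENNReal.ofReal (‖z‖ ^ 2 * ‖fderiv ℝ ζ (y + t • z)‖ ^ 2) := by
        refine lintegral_mono fun y => ?_
        have hc : Continuous (fun t : ℝ => ‖z‖ ^ 2 * ‖fderiv ℝ ζ (y + t • z)‖ ^ 2) := by fun_prop
        rw [← ofReal_integral_eq_lintegral_ofReal
          ((hc.integrableOn_Icc).mono_set Ioc_subset_Icc_self) (ae_of_all _ fun t => by positivity),
          add_comm z y]
        exact ENNReal.ofReal_le_ofReal (sq_sub_translate_le hζ y z)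
    _ = ∫⁻ t in Ioc (0 : ℝ) 1, ∫⁻ y,
          ENNReal.ofReal (‖z‖ ^ 2 * ‖fderiv ℝ ζ (y + t • z)‖ ^ 2) := by
        refine lintegral_lintegral_swap (Continuous.aemeasurable ?_)
        exact ENNReal.continuous_ofReal.comp (by fun_prop)
    _ = ∫⁻ _ in Ioc (0 : ℝ) 1, ∫⁻ x, ENNReal.ofReal (‖z‖ ^ 2 * ‖fderiv ℝ ζ x‖ ^ 2) := by
        refine lintegral_congr fun t => ?_
        exact lintegral_add_right_eq_self
          (fun x => ENNReal.ofReal (‖z‖ ^ 2 * ‖fderiv ℝ ζ x‖ ^ 2)) (t • z)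
    _ = ENNReal.ofReal (‖z‖ ^ 2) * ∫⁻ x, ENNReal.ofReal (‖fderiv ℝ ζ x‖ ^ 2) := by
        simp_rw [ENNReal.ofReal_mul (sq_nonneg ‖z‖)]
        rw [lintegral_const_mul' _ _ ENNReal.ofReal_ne_top]
        simp

/-- Carré-du-champ estimate: for `g : ℝ^d → ℝ` measurable with `∫ |z|² |g(z)| dz < ∞`
and `ζ : ℝ^d → ℝ` of class `C¹` with compact support,
`∬ (ζ(x) − ζ(y))² |g(x − y)| dx dy ≤ (∫ |z|² |g(z)| dz) ∫ |∇ζ|²`. -/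
theorem carre_du_champ_estimate (d : ℕ) (g ζ : EuclideanSpace ℝ (Fin d) → ℝ)
    (hgmeas : Measurable g)
    (hgmom : Integrable (fun z : EuclideanSpace ℝ (Fin d) => ‖z‖ ^ 2 * |g z|))
    (hζ : ContDiff ℝ 1 ζ) (hζsupp : HasCompactSupport ζ) :
    (∫ p : EuclideanSpace ℝ (Fin d) × EuclideanSpace ℝ (Fin d),
        (ζ p.1 - ζ p.2) ^ 2 * |g (p.1 - p.2)|)
      ≤ (∫ z : EuclideanSpace ℝ (Fin d), ‖z‖ ^ 2 * |g z|)
        * ∫ x : EuclideanSpace ℝ (Fin d), ‖fderiv ℝ ζ x‖ ^ 2 := by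
  have hf : Continuous (fderiv ℝ ζ) := hζ.continuous_fderiv one_ne_zero
  have hζm : Measurable ζ := hζ.continuous.measurable
  have hsupp : HasCompactSupport (fun x => ‖fderiv ℝ ζ x‖ ^ 2) :=
    (hζsupp.fderiv ℝ).mono fun x hx => by
      contrapose! hx
      simp only [Function.mem_support, not_not] at hx ⊢
      rw [hx, norm_zero, zero_pow two_ne_zero]
  have hfint : Integrable (fun x => ‖fderiv ℝ ζ x‖ ^ 2) :=
    (hf.norm.pow 2).integrable_of_hasCompactSupport hsupp
  have habs : Measurable (fun z => |g z|) := by simpa using hgmeas.norm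
  have hF : Measurable (fun p : EuclideanSpace ℝ (Fin d) × EuclideanSpace ℝ (Fin d) =>
      (ζ p.1 - ζ p.2) ^ 2 * |g (p.1 - p.2)|) :=
    (((hζm.comp measurable_fst).sub (hζm.comp measurable_snd)).pow_const 2).mul
      (habs.comp (measurable_fst.sub measurable_snd))
  have hg0 : 0 ≤ ∫ z : EuclideanSpace ℝ (Fin d), ‖z‖ ^ 2 * |g z| :=
    integral_nonneg fun z => by positivity
  have hf0 : 0 ≤ ∫ x : EuclideanSpace ℝ (Fin d), ‖fderiv ℝ ζ x‖ ^ 2 :=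
    integral_nonneg fun z => by positivity
  rw [integral_eq_lintegral_of_nonneg_ae (ae_of_all _ fun p => by positivity)
    hF.aestronglyMeasurable]
  refine ENNReal.toReal_le_of_le_ofReal (mul_nonneg hg0 hf0) ?_
  rw [ENNReal.ofReal_mul hg0,
    ofReal_integral_eq_lintegral_ofReal hgmom (ae_of_all _ fun z => by positivity),
    ofReal_integral_eq_lintegral_ofReal hfint (ae_of_all _ fun z => by positivity)]
  calc ∫⁻ p : EuclideanSpace ℝ (Fin d) × EuclideanSpace ℝ (Fin d),
        ENNReal.ofReal ((ζ p.1 - ζ p.2) ^ 2 * |g (p.1 - p.2)|)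
      = ∫⁻ y, ∫⁻ x, ENNReal.ofReal ((ζ x - ζ y) ^ 2 * |g (x - y)|) :=
        lintegral_prod_symm _ hF.ennreal_ofReal.aemeasurable
    _ = ∫⁻ y, ∫⁻ z, ENNReal.ofReal ((ζ (z + y) - ζ y) ^ 2 * |g z|) := by
        refine lintegral_congr fun y => ?_
        rw [← lintegral_add_right_eq_self _ y]
        simp
    _ = ∫⁻ z, ∫⁻ y, ENNReal.ofReal ((ζ (z + y) - ζ y) ^ 2 * |g z|) := by
        refine lintegral_lintegral_swap (Measurable.aemeasurable (Measurable.ennreal_ofReal ?_))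
        exact (((hζm.comp (measurable_snd.add measurable_fst)).sub
          (hζm.comp measurable_fst)).pow_const 2).mul (habs.comp measurable_snd)
    _ ≤ ∫⁻ z, ENNReal.ofReal (‖z‖ ^ 2 * |g z|)
          * ∫⁻ x, ENNReal.ofReal (‖fderiv ℝ ζ x‖ ^ 2) := by
        refine lintegral_mono fun z => ?_
        simp_rw [ENNReal.ofReal_mul (sq_nonneg _)]
        rw [lintegral_mul_const' _ _ ENNReal.ofReal_ne_top, mul_right_comm]
        gcongr
        exact lintegral_sq_sub_translate_le hζ z
    _ = (∫⁻ z, ENNReal.ofReal (‖z‖ ^ 2 * |g z|))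
          * ∫⁻ x, ENNReal.ofReal (‖fderiv ℝ ζ x‖ ^ 2) :=
        lintegral_mul_const'' _ hgmom.aestronglyMeasurable.aemeasurable.ennreal_ofReal
end
end

section
/- For every continuously differentiable function v : ℝ^d → ℝ^m and all points a, b ∈ ℝ^d, one has | ∫_{B_1(a)} v − ∫_{B_1(b)} v | ≤ |a − b| ∫_{B_{1+|a−b|}(b)} |∇v|, where |∇v| denotes the pointwise operator (or Euclidean) norm of the derivative of v. -/
open MeasureTheory Metric Set

noncomputable section

/-! After translation, the integral of `v` over the unit ball centred at `c` is the integral over the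
fixed ball `B_1(0)` of `x ↦ v (x + c)`. Along the segment `c = b + t (a - b)`, `0 ≤ t ≤ 1`, it can
therefore be differentiated in `t` under the integral sign (`hasDerivAt_ball_average`), with
derivative `∫_{B_1(c)} ∇v · (a - b)`. Since `B_1(c) ⊆ B_{1+|a-b|}(b)`, this derivative is bounded
by `|a - b| ∫_{B_{1+|a-b|}(b)} |∇v|`, and the mean value inequality on `[0, 1]` concludes. -/

theorem setIntegral_ball_eq_translate {d : ℕ} {F : Type*} [NormedAddCommGroup F] [NormedSpace ℝ F]
    (f : EuclideanSpace ℝ (Fin d) → F) (c : EuclideanSpace ℝ (Fin d)) :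
    ∫ x in ball c 1, f x = ∫ x in ball (0 : EuclideanSpace ℝ (Fin d)) 1, f (x + c) := by
  have h := (measurePreserving_add_right (volume : Measure (EuclideanSpace ℝ (Fin d)))
    c).setIntegral_preimage_emb (measurableEmbedding_addRight c) f (ball c 1)
  rw [← h]
  congr 2
  ext x
  simp [dist_eq_norm]

/-- Differentiation under the integral sign for the integral over a uniformly moving unit ball. -/
theorem hasDerivAt_ball_average {d m : ℕ}
    {v : EuclideanSpace ℝ (Fin d) → EuclideanSpace ℝ (Fin m)}
    (hv : ContDiff ℝ 1 v) (b w : EuclideanSpace ℝ (Fin d)) (t : ℝ) :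
    HasDerivAt (fun s : ℝ => ∫ x in ball (b + s • w) 1, v x)
      (∫ x in ball (b + t • w) 1, fderiv ℝ v x w) t := by
  simp only [setIntegral_ball_eq_translate _ (b + _ • w)]
  have hc : Continuous (fderiv ℝ v) := hv.continuous_fderiv one_ne_zero
  -- All the balls with parameter within distance `1` of `t` lie in one compact ball.
  obtain ⟨C, hC⟩ := (isCompact_closedBall (0 : EuclideanSpace ℝ (Fin d))
    (1 + (‖b‖ + (|t| + 1) * ‖w‖))).exists_bound_of_continuousOn
    (f := fun x => fderiv ℝ v x w) (by fun_prop)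
  have : IsFiniteMeasure (volume.restrict (ball (0 : EuclideanSpace ℝ (Fin d)) 1)) :=
    ⟨by simpa using measure_ball_lt_top⟩
  have hcont : ∀ s : ℝ, Continuous fun x => v (x + (b + s • w)) := fun s =>
    hv.continuous.comp (by fun_prop)
  refine (hasDerivAt_integral_of_dominated_loc_of_deriv_le
    (F := fun (s : ℝ) x => v (x + (b + s • w)))
    (F' := fun (s : ℝ) x => fderiv ℝ v (x + (b + s • w)) w)
    (bound := fun _ => C) (ball_mem_nhds t one_pos) ?_ ?_ ?_ ?_ (integrable_const C) ?_).2
  · exact .of_forall fun s => (hcont s).aestronglyMeasurable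
  · exact ((hcont t).continuousOn.integrableOn_compact (isCompact_closedBall 0 1)).mono_set
      ball_subset_closedBall
  · exact Continuous.aestronglyMeasurable (by fun_prop)
  · refine (ae_restrict_iff' measurableSet_ball).2 (.of_forall fun x hx s hs => hC _ ?_)
    rw [mem_ball_zero_iff] at hx
    rw [mem_closedBall_zero_iff]
    have hs' : |s| ≤ |t| + 1 := by
      rw [mem_ball, Real.dist_eq] at hs
      have := abs_sub_abs_le_abs_sub s t
      linarith
    refine (norm_add_le _ _).trans (add_le_add hx.le ((norm_add_le _ _).trans ?_))
    rw [norm_smul, Real.norm_eq_abs]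
    gcongr
  · refine .of_forall fun x s _ => ?_
    have h1 : HasDerivAt (fun s : ℝ => x + (b + s • w)) w s := by
      simpa using (((hasDerivAt_id s).smul_const w).const_add b).const_add x
    exact ((hv.differentiable one_ne_zero _).hasFDerivAt).comp_hasDerivAt s h1

/-- Moving the averaging ball: for every `C¹` function `v : ℝ^d → ℝ^m` and points
`a, b ∈ ℝ^d`,
`‖∫_{B_1(a)} v − ∫_{B_1(b)} v‖ ≤ |a − b| ∫_{B_{1+|a−b|}(b)} ‖∇v‖`. -/
theorem moved_ball_average (d m : ℕ)
    (v : EuclideanSpace ℝ (Fin d) → EuclideanSpace ℝ (Fin m))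
    (hv : ContDiff ℝ 1 v) (a b : EuclideanSpace ℝ (Fin d)) :
    ‖(∫ x in Metric.ball a 1, v x) - ∫ x in Metric.ball b 1, v x‖
      ≤ ‖a - b‖ * ∫ x in Metric.ball b (1 + ‖a - b‖), ‖fderiv ℝ v x‖ := by
  have hc : Continuous (fderiv ℝ v) := hv.continuous_fderiv one_ne_zero
  have hint : IntegrableOn (fun x => ‖fderiv ℝ v x‖) (ball b (1 + ‖a - b‖)) :=
    (hc.norm.continuousOn.integrableOn_compact (isCompact_closedBall b _)).mono_set
      ball_subset_closedBall
  have key := norm_image_sub_le_of_norm_deriv_le_segment_01'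
    (f := fun s : ℝ => ∫ x in ball (b + s • (a - b)) 1, v x)
    (C := ‖a - b‖ * ∫ x in ball b (1 + ‖a - b‖), ‖fderiv ℝ v x‖)
    (fun t _ => (hasDerivAt_ball_average hv b (a - b) t).hasDerivWithinAt) ?_
  · simpa using key
  · intro t ht
    have hsub : ball (b + t • (a - b)) 1 ⊆ ball b (1 + ‖a - b‖) := by
      refine ball_subset_ball' ?_
      rw [dist_eq_norm, add_sub_cancel_left, norm_smul, Real.norm_of_nonneg ht.1]
      have := mul_le_of_le_one_left (norm_nonneg (a - b)) ht.2.le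
      linarith
    calc ‖∫ x in ball (b + t • (a - b)) 1, fderiv ℝ v x (a - b)‖
        ≤ ∫ x in ball (b + t • (a - b)) 1, ‖a - b‖ * ‖fderiv ℝ v x‖ :=
          norm_integral_le_of_norm_le ((hint.mono_set hsub).const_mul _)
            (.of_forall fun x => by
              rw [mul_comm]
              exact (fderiv ℝ v x).le_opNorm _)
      _ = ‖a - b‖ * ∫ x in ball (b + t • (a - b)) 1, ‖fderiv ℝ v x‖ := integral_const_mul _ _
      _ ≤ ‖a - b‖ * ∫ x in ball b (1 + ‖a - b‖), ‖fderiv ℝ v x‖ := by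
          exact mul_le_mul_of_nonneg_left (setIntegral_mono_set hint
            (.of_forall fun x => norm_nonneg _) hsub.eventuallyLE) (norm_nonneg _)
end
end
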